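/- For every integer q ≥ 2, the graph ME_q (the complement of MEbar_q) admits a frozen (2q+1)-colouring. -/

import Mathlib

/-- A colouring is frozen if every vertex has a neighbour in each colour class
other than its own. -/
def IsFrozenColoring {V : Type*} (G : SimpleGraph V) {k : ℕ} (C : G.Coloring (Fin k)) : Prop :=
  ∀ (v : V) (j : Fin k), j ≠ C v → ∃ w : V, G.Adj v w ∧ C w = j

/-- The graph `MEbar_q`.  The vertices `0, 1, …, q+1` of `Fin (4q+2)` are
`u_0, …, u_{q+1}` and, for `1 ≤ i ≤ q`, the vertices `q+3i-1, q+3i, q+3i+1` are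
`v_{i1}, v_{i2}, v_{i3}`; listed in this order the vertices form a Hamiltonian cycle,
and the extra edges are `u_i v_{i2}` and `v_{i1} v_{i3}` for `1 ≤ i ≤ q`. -/
def MEbar (q : ℕ) : SimpleGraph (Fin (4*q+2)) :=
  SimpleGraph.fromRel (fun a b =>
    b.val = a.val + 1 ∨ (a.val = 0 ∧ b.val = 4*q+1) ∨
    (∃ i, 1 ≤ i ∧ i ≤ q ∧ a.val = i ∧ b.val = q + 3*i) ∨
    (∃ i, 1 ≤ i ∧ i ≤ q ∧ a.val = q + 3*i - 1 ∧ b.val = q + 3*i + 1))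

/-!
If a graph `H` has a perfect matching none of whose edges lies in a triangle, then the edges of the
matching are the classes of a frozen colouring of `Hᶜ`: each class is a clique of `H`, and no vertex
outside a class is `H`-adjacent to both of its elements. In `MEbar q` the only triangles are
`v_{i1} v_{i2} v_{i3}`, and their edges are avoided by the perfect matching consisting of the
chords `u_i v_{i2}` and the cycle edges `u_{q+1} v_{11}`, `v_{i3} v_{(i+1)1}` and `v_{q3} u_0`.
-/

section PerfectMatching

variable {V : Type*} {H : SimpleGraph V} {k : ℕ}

theorem isFrozenColoring_compl_of_commonNeighbors_eq_empty (C : Hᶜ.Coloring (Fin k))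
    (hC : ∀ j, ∃ s t, C s = j ∧ C t = j ∧ H.commonNeighbors s t = ∅) :
    IsFrozenColoring Hᶜ C := by
  intro v j hj
  obtain ⟨s, t, hs, ht, htri⟩ := hC j
  have hvs : v ≠ s := by rintro rfl; exact hj hs.symm
  have hvt : v ≠ t := by rintro rfl; exact hj ht.symm
  by_cases adj_vs : H.Adj v s
  · have not_adj_vt : ¬ H.Adj v t := fun adj_vt =>
      htri.le (H.mem_commonNeighbors.mpr ⟨adj_vs.symm, adj_vt.symm⟩)
    exact ⟨t, (H.compl_adj v t).mpr ⟨hvt, not_adj_vt⟩, ht⟩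
  · exact ⟨s, (H.compl_adj v s).mpr ⟨hvs, adj_vs⟩, hs⟩

theorem exists_coloring_compl_of_perfectMatching {ι : Type*} (number : ι ≃ Fin k) {s t : ι → V}
    (hbij : Function.Bijective (Sum.elim s t)) (hadj : ∀ j, H.Adj (s j) (t j)) :
    ∃ C : Hᶜ.Coloring (Fin k), ∀ j, C (s j) = number j ∧ C (t j) = number j := by
  let ends : ι ⊕ ι ≃ V := Equiv.ofBijective _ hbij
  let colour : V → Fin k := fun v => number (Sum.elim id id (ends.symm v))
  have colour_ends (x : ι ⊕ ι) : colour (ends x) = number (Sum.elim id id x) :=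
    congrArg (fun y => number (Sum.elim id id y)) (ends.symm_apply_apply x)
  have proper {v w : V} (hvw : Hᶜ.Adj v w) : colour v ≠ colour w := by
    intro hc
    obtain ⟨hne, hnadj⟩ := (H.compl_adj v w).mp hvw
    obtain ⟨x, rfl⟩ := ends.surjective v
    obtain ⟨y, rfl⟩ := ends.surjective w
    rw [colour_ends, colour_ends, number.apply_eq_iff_eq] at hc
    rcases x with i | i <;> rcases y with j | j <;> obtain rfl : i = j := hc
    exacts [hne rfl, hnadj (hadj i), hnadj (hadj i).symm, hne rfl]
  exact ⟨SimpleGraph.Coloring.mk colour proper,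
    fun j => ⟨colour_ends (.inl j), colour_ends (.inr j)⟩⟩

theorem exists_isFrozenColoring_compl_of_perfectMatching {ι : Type*} [Fintype ι]
    (hk : Fintype.card ι = k) {s t : ι → V} (hbij : Function.Bijective (Sum.elim s t))
    (hadj : ∀ j, H.Adj (s j) (t j)) (htri : ∀ j, H.commonNeighbors (s j) (t j) = ∅) :
    ∃ C : Hᶜ.Coloring (Fin k), IsFrozenColoring Hᶜ C := by
  let number : ι ≃ Fin k := Fintype.equivFinOfCardEq hk
  obtain ⟨C, hC⟩ := exists_coloring_compl_of_perfectMatching number hbij hadj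
  refine ⟨C, isFrozenColoring_compl_of_commonNeighbors_eq_empty C fun c => ?_⟩
  obtain ⟨j, rfl⟩ := number.surjective c
  exact ⟨s j, t j, (hC j).1, (hC j).2, htri j⟩

end PerfectMatching

namespace MEbar

variable {q : ℕ}

theorem adj_iff_of_lt {a b : Fin (4 * q + 2)} (hab : a < b) :
    (MEbar q).Adj a b ↔ b.val = a.val + 1 ∨ (a.val = 0 ∧ b.val = 4 * q + 1) ∨
      (1 ≤ a.val ∧ a.val ≤ q ∧ b.val = q + 3 * a.val) ∨
      ∃ i < q, a.val = q + 3 * i + 2 ∧ b.val = q + 3 * i + 4 := by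
  rw [MEbar, SimpleGraph.fromRel_adj]
  constructor
  · rintro ⟨-, (h | h | ⟨i, h⟩ | ⟨i, h⟩) | (h | h | ⟨i, h⟩ | ⟨i, h⟩)⟩
    case inl.inr.inr.inr => exact .inr (.inr (.inr ⟨i - 1, by omega⟩))
    all_goals omega
  · rintro (h | h | h | ⟨i, h⟩)
    · exact ⟨hab.ne, .inl (.inl h)⟩
    · exact ⟨hab.ne, .inl (.inr (.inl h))⟩
    · exact ⟨hab.ne, .inl (.inr (.inr (.inl ⟨a, by omega⟩)))⟩
    · exact ⟨hab.ne, .inl (.inr (.inr (.inr ⟨i + 1, by omega⟩)))⟩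

theorem triangle_eq_of_lt {a b c : Fin (4 * q + 2)} (hab : a < b) (hbc : b < c)
    (adj_ab : (MEbar q).Adj a b) (adj_bc : (MEbar q).Adj b c) (adj_ac : (MEbar q).Adj a c) :
    ∃ i < q, a.val = q + 3 * i + 2 ∧ b.val = q + 3 * i + 3 ∧ c.val = q + 3 * i + 4 := by
  rw [adj_iff_of_lt hab] at adj_ab
  rw [adj_iff_of_lt hbc] at adj_bc
  rw [adj_iff_of_lt (hab.trans hbc)] at adj_ac
  rcases adj_ac with h_ac | h_ac | h_ac | ⟨i, h_ac⟩
  case inr.inr.inr => exact ⟨i, by omega⟩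
  all_goals
    rcases adj_ab with h_ab | h_ab | h_ab | ⟨i, h_ab⟩ <;>
      rcases adj_bc with h_bc | h_bc | h_bc | ⟨j, h_bc⟩ <;> omega

theorem exists_block_of_mem_commonNeighbors {a b w : Fin (4 * q + 2)} (hab : a < b)
    (adj_ab : (MEbar q).Adj a b) (hw : w ∈ (MEbar q).commonNeighbors a b) :
    ∃ i < q, q + 3 * i + 2 ≤ a.val ∧ b.val ≤ q + 3 * i + 4 := by
  obtain ⟨adj_aw, adj_bw⟩ := (MEbar q).mem_commonNeighbors.mp hw
  rcases adj_aw.ne.lt_or_gt with haw | hwa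
  · rcases adj_bw.ne.lt_or_gt with hbw | hwb
    · obtain ⟨i, h⟩ := triangle_eq_of_lt hab hbw adj_ab adj_bw adj_aw
      exact ⟨i, by omega⟩
    · obtain ⟨i, h⟩ := triangle_eq_of_lt haw hwb adj_aw adj_bw.symm adj_ab
      exact ⟨i, by omega⟩
  · obtain ⟨i, h⟩ := triangle_eq_of_lt hwa hab adj_aw.symm adj_ab adj_bw.symm
    exact ⟨i, by omega⟩

/-- The smaller endpoints of a perfect matching of `MEbar q` that avoids its triangles: `none`
stands for the edge `u_0 v_{q3}` and, for `i < q`, `some (inl i)` for the chord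
`u_{i+1} v_{(i+1)2}` and `some (inr i)` for the cycle edge ending in `v_{(i+1)1}`. -/
def matchingLeft (q : ℕ) : Option (Fin q ⊕ Fin q) → Fin (4 * q + 2)
  | none => 0
  | some (.inl i) => ⟨i + 1, by omega⟩
  | some (.inr i) => ⟨q + 3 * i + 1, by omega⟩

/-- The larger endpoints of the matching whose smaller endpoints are given by `matchingLeft`. -/
def matchingRight (q : ℕ) : Option (Fin q ⊕ Fin q) → Fin (4 * q + 2)
  | none => ⟨4 * q + 1, by omega⟩
  | some (.inl i) => ⟨q + 3 * i + 3, by omega⟩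
  | some (.inr i) => ⟨q + 3 * i + 2, by omega⟩

theorem matchingLeft_lt_matchingRight (j : Option (Fin q ⊕ Fin q)) :
    matchingLeft q j < matchingRight q j := by
  rcases j with _ | i | i <;> simp only [matchingLeft, matchingRight, Fin.lt_def, Fin.val_zero] <;>
    omega

theorem adj_matchingLeft_matchingRight (j : Option (Fin q ⊕ Fin q)) :
    (MEbar q).Adj (matchingLeft q j) (matchingRight q j) := by
  rw [adj_iff_of_lt (matchingLeft_lt_matchingRight j)]
  rcases j with _ | i | i
  · exact .inr (.inl ⟨rfl, rfl⟩)
  · exact .inr (.inr (.inl ⟨Nat.le_add_left 1 i, i.isLt, rfl⟩))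
  · exact .inl rfl

theorem commonNeighbors_matching_eq_empty (j : Option (Fin q ⊕ Fin q)) :
    (MEbar q).commonNeighbors (matchingLeft q j) (matchingRight q j) = ∅ := by
  refine Set.eq_empty_of_forall_notMem fun w hw => ?_
  obtain ⟨block, -, hleft, hright⟩ := exists_block_of_mem_commonNeighbors
    (matchingLeft_lt_matchingRight j) (adj_matchingLeft_matchingRight j) hw
  rcases j with _ | i | i <;>
    simp only [matchingLeft, matchingRight, Fin.val_zero] at hleft hright <;> omega

theorem surjective_matching :
    Function.Surjective (Sum.elim (matchingLeft q) (matchingRight q)) := by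
  intro ⟨a, ha⟩
  rcases Nat.lt_or_ge q a with hqa | haq
  · obtain ⟨i, rfl | rfl | rfl⟩ : ∃ i, a = q + 3 * i + 1 ∨ a = q + 3 * i + 2 ∨ a = q + 3 * i + 3 :=
      ⟨(a - q - 1) / 3, by omega⟩
    · rcases (show i ≤ q by omega).lt_or_eq with hi | rfl
      · exact ⟨.inl (some (.inr ⟨i, hi⟩)), rfl⟩
      · exact ⟨.inr none, Fin.ext (show 4 * i + 1 = i + 3 * i + 1 by omega)⟩
    · exact ⟨.inr (some (.inr ⟨i, by omega⟩)), rfl⟩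
    · exact ⟨.inr (some (.inl ⟨i, by omega⟩)), rfl⟩
  · rcases a with _ | i
    · exact ⟨.inl none, rfl⟩
    · exact ⟨.inl (some (.inl ⟨i, haq⟩)), rfl⟩

theorem bijective_matching :
    Function.Bijective (Sum.elim (matchingLeft q) (matchingRight q)) := by
  refine surjective_matching.bijective_of_nat_card_le ?_
  simp only [Nat.card_eq_fintype_card, Fintype.card_sum, Fintype.card_option, Fintype.card_fin]
  omega

end MEbar

/-- for every `q ≥ 2`, `ME_q` (the complement of `MEbar_q`) admits a
frozen `(2q+1)`-colouring. -/
theorem stmt9 : ∀ q : ℕ, 2 ≤ q →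
    ∃ C : ((MEbar q)ᶜ).Coloring (Fin (2*q+1)), IsFrozenColoring (MEbar q)ᶜ C := by
  intro q _
  have card_colours : Fintype.card (Option (Fin q ⊕ Fin q)) = 2 * q + 1 := by
    rw [Fintype.card_option, Fintype.card_sum, Fintype.card_fin, two_mul]
  exact exists_isFrozenColoring_compl_of_perfectMatching card_colours MEbar.bijective_matching
    MEbar.adj_matchingLeft_matchingRight MEbar.commonNeighbors_matching_eq_empty
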